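/- arXiv:2208.04180 — 2 statements merged into one kernel-verified Lean document; each statement's English description precedes it below -/
import Mathlib

section
/- Let Ψ be a parse tree and let α be a height reducing rotation applicable at an inner node v of Ψ; apply α at v. Then every node of lp⁻¹(v) that was yellow before the rotation is green after the rotation, and every node of lp⁻¹(v) other than v has its absolute balance decreased by exactly one. -/
/-! ### Parse trees

A parse tree is a finite binary tree in which every inner node has exactly
two children.  Nodes of a parse tree are identified either with the subtree
rooted at them, or with the path (list of booleans, `false` = left,
`true` = right) leading to them from the root. -/

inductive PTree : Type
  | leaf : PTree
  | node : PTree → PTree → PTree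

namespace PTree

/-- The height of a parse tree: the maximal number of nodes on a path from
the root to a leaf (a leaf has height 1). -/
def height : PTree → ℕ
  | leaf => 1
  | node l r => 1 + max l.height r.height

/-- The number of leaves `‖Ψ‖` of a parse tree. -/
def leaves : PTree → ℕ
  | leaf => 1
  | node l r => l.leaves + r.leaves

/-- `balance(v)`: height of the right subtree minus height of the left
subtree (0 for a leaf). -/
def bal : PTree → ℤ
  | leaf => 0
  | node l r => (r.height : ℤ) - (l.height : ℤ)

/-- The absolute balance `|balance(v)|`. -/
def abal (t : PTree) : ℤ := |t.bal|

/-- `B(Ψ)`: the sum of the absolute balances of all (inner) nodes. -/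
def totalBal : PTree → ℤ
  | leaf => 0
  | node l r => |(r.height : ℤ) - (l.height : ℤ)| + l.totalBal + r.totalBal

def isLeaf : PTree → Prop
  | leaf => True
  | node _ _ => False

/-- A node is *green* if `height(Ψ_v) ≤ 10·log₂‖Ψ_v‖` (leaves are green by
convention). -/
def Green (t : PTree) : Prop :=
  t.isLeaf ∨ (t.height : ℝ) ≤ 10 * Real.logb 2 (t.leaves : ℝ)

/-- A node is *yellow* if `height(Ψ_v) − 1 ≤ 10·log₂‖Ψ_v‖ < height(Ψ_v)`. -/
def Yellow (t : PTree) : Prop :=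
  ¬ t.isLeaf ∧ 10 * Real.logb 2 (t.leaves : ℝ) < (t.height : ℝ) ∧
    (t.height : ℝ) - 1 ≤ 10 * Real.logb 2 (t.leaves : ℝ)

/-- A node is *red* if it is neither green nor yellow. -/
def Red (t : PTree) : Prop := ¬ t.Green ∧ ¬ t.Yellow

/-- `IsSubtree t s`: `t` is the subtree of `s` rooted at some node of `s`. -/
inductive IsSubtree : PTree → PTree → Prop
  | refl (t : PTree) : IsSubtree t t
  | left {t l r : PTree} : IsSubtree t l → IsSubtree t (node l r)
  | right {t l r : PTree} : IsSubtree t r → IsSubtree t (node l r)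

/-- The subtree rooted at the node reached by following the path `p`
(`false` = left child, `true` = right child), if it exists. -/
def subtreeAt : PTree → List Bool → Option PTree
  | t, [] => some t
  | leaf, _ :: _ => none
  | node l _, false :: p => subtreeAt l p
  | node _ r, true :: p => subtreeAt r p

/-- Replace the subtree at path `p` by `s`. -/
def replaceAt : PTree → List Bool → PTree → PTree
  | _, [], s => s
  | leaf, _ :: _, _ => leaf
  | node l r, false :: p, s => node (replaceAt l p s) r
  | node l r, true :: p, s => node l (replaceAt r p s)

/-- `onLongPath t p`: the node of `t` reached by the path `p` lies on the
long path `lp(root of t)`.  The long path of `v` is `v` itself if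
`balance(v) = 0` (in particular if `v` is a leaf) and otherwise continues
into the strictly deeper subtree. -/
def onLongPath : PTree → List Bool → Prop
  | _, [] => True
  | leaf, _ :: _ => False
  | node l r, false :: p => r.height < l.height ∧ onLongPath l p
  | node l r, true :: p => l.height < r.height ∧ onLongPath r p

/-- The long path `lp(v)` of (the subtree rooted at) `v`, as the list of the
subtrees rooted at its nodes. -/
def lpList : PTree → List PTree
  | leaf => [leaf]
  | node l r =>
    if l.height = r.height then [node l r]
    else if l.height < r.height then node l r :: lpList r
    else node l r :: lpList l

/-- `IsComb t a b` : `t` is an inner node whose two subtrees are `a` and `b`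
(in either order). -/
def IsComb (t a b : PTree) : Prop := t = node a b ∨ t = node b a

end PTree

/-!
A height reducing rotation lowers the height of the rotated subtree by exactly one and keeps its
leaves. If `v` lies on the long path of an ancestor, the path from the ancestor to `v` always
descends into the strictly deeper subtree, so the loss of one level propagates up to the ancestor.
The deeper side shrinks by one but remains at least as high as the other side, which is why the
absolute balance drops by exactly one. A node that is not red exceeds the green bound by at most one
level, which is precisely the level it loses.
-/

namespace PTree

theorem leaves_pos (t : PTree) : 0 < t.leaves := by
  induction t with
  | leaf => exact Nat.one_pos
  | node l r ihl _ => exact Nat.add_pos_left ihl _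

section Color

variable {t t' : PTree}

theorem not_red_iff : ¬ t.Red ↔ (t.height : ℝ) ≤ 10 * Real.logb 2 t.leaves + 1 := by
  cases t with
  | leaf => simp [Red, Green, isLeaf, height, leaves]
  | node l r => grind [Red, Green, Yellow, isLeaf]

theorem Yellow.not_red (h : t.Yellow) : ¬ t.Red := fun hr => hr.2 h

theorem green_of_height_lt_of_not_red (ht : ¬ t.Red) (hheight : t'.height < t.height)
    (hleaves : t.leaves ≤ t'.leaves) : t'.Green := by
  have hbound := not_red_iff.1 ht
  have hlost : (t'.height : ℝ) + 1 ≤ t.height := by exact_mod_cast hheight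
  have hlog : Real.logb 2 t.leaves ≤ Real.logb 2 t'.leaves :=
    Real.logb_le_logb_of_le one_lt_two (by exact_mod_cast t.leaves_pos) (by exact_mod_cast hleaves)
  exact Or.inr (by linarith)

end Color

theorem subtreeAt_append (t : PTree) (p s : List Bool) :
    t.subtreeAt (p ++ s) = (t.subtreeAt p).bind (·.subtreeAt s) := by
  fun_induction subtreeAt t p <;> simp_all [subtreeAt]

theorem subtreeAt_replaceAt_append (t : PTree) (p s : List Bool) (a : PTree) :
    (t.replaceAt (p ++ s) a).subtreeAt p = (t.subtreeAt p).map (·.replaceAt s a) := by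
  fun_induction subtreeAt t p <;> simp_all [subtreeAt, replaceAt]

theorem leaves_le_leaves_replaceAt {t b a : PTree} {s : List Bool}
    (hb : t.subtreeAt s = some b) (hle : b.leaves ≤ a.leaves) :
    t.leaves ≤ (t.replaceAt s a).leaves := by
  fun_induction subtreeAt t s <;> simp_all [replaceAt, leaves]

theorem height_eq_height_replaceAt_add_one {t b a : PTree} {s : List Bool}
    (hb : t.subtreeAt s = some b) (hs : t.onLongPath s) (hheight : b.height = a.height + 1) :
    t.height = (t.replaceAt s a).height + 1 := by
  match t, s with
  | t, [] =>
    obtain rfl : t = b := by simpa only [subtreeAt, Option.some.injEq] using hb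
    simpa only [replaceAt] using hheight
  | leaf, _ :: _ => contradiction
  | node l r, false :: s =>
    have hl : l.height = (l.replaceAt s a).height + 1 :=
      height_eq_height_replaceAt_add_one hb hs.2 hheight
    have hdeep : r.height < l.height := hs.1
    simp only [replaceAt, height]
    omega
  | node l r, true :: s =>
    have hr : r.height = (r.replaceAt s a).height + 1 :=
      height_eq_height_replaceAt_add_one hb hs.2 hheight
    have hdeep : l.height < r.height := hs.1
    simp only [replaceAt, height]
    omega

theorem abal_node (l r : PTree) : (node l r).abal = |(r.height : ℤ) - l.height| := rfl

theorem abal_replaceAt {t b a : PTree} {s : List Bool} (hb : t.subtreeAt s = some b)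
    (hs : t.onLongPath s) (hne : s ≠ []) (hheight : b.height = a.height + 1) :
    (t.replaceAt s a).abal = t.abal - 1 := by
  match t, s with
  | _, [] => contradiction
  | leaf, _ :: _ => contradiction
  | node l r, false :: s =>
    have hl : l.height = (l.replaceAt s a).height + 1 :=
      height_eq_height_replaceAt_add_one hb hs.2 hheight
    have hdeep : r.height < l.height := hs.1
    simp only [replaceAt, abal_node]
    rw [abs_of_nonpos (by omega), abs_of_nonpos (by omega)]
    omega
  | node l r, true :: s =>
    have hr : r.height = (r.replaceAt s a).height + 1 :=
      height_eq_height_replaceAt_add_one hb hs.2 hheight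
    have hdeep : l.height < r.height := hs.1
    simp only [replaceAt, abal_node]
    rw [abs_of_nonneg (by omega), abs_of_nonneg (by omega)]
    omega

section Rotation

variable {t a b : PTree}

theorem IsComb.height_eq (h : IsComb t a b) : t.height = 1 + max a.height b.height := by
  rcases h with rfl | rfl
  · rfl
  · rw [max_comm]; rfl

theorem IsComb.leaves_eq (h : IsComb t a b) : t.leaves = a.leaves + b.leaves := by
  rcases h with rfl | rfl
  · rfl
  · rw [add_comm]; rfl

variable {up down stay w before after w' : PTree}

theorem height_eq_height_add_one_of_rotation (hw : IsComb w up stay)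
    (hbefore : IsComb before w down) (hw' : IsComb w' down stay) (hafter : IsComb after up w')
    (hhr : max down.height stay.height < up.height) : before.height = after.height + 1 := by
  rw [hbefore.height_eq, hw.height_eq, hafter.height_eq, hw'.height_eq]
  omega

theorem leaves_eq_of_rotation (hw : IsComb w up stay) (hbefore : IsComb before w down)
    (hw' : IsComb w' down stay) (hafter : IsComb after up w') : before.leaves = after.leaves := by
  rw [hbefore.leaves_eq, hw.leaves_eq, hafter.leaves_eq, hw'.leaves_eq]
  omega

end Rotation

end PTree

theorem height_reducing_rotation_lp_inv_general
    (Ψ : PTree) (q : List Bool) (before after : PTree)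
    (hq : Ψ.subtreeAt q = some before)
    (hheight : before.height = after.height + 1)
    (hleaves : before.leaves ≤ after.leaves) :
    ∀ p, p <+: q →
      ∀ t t', Ψ.subtreeAt p = some t →
        (Ψ.replaceAt q after).subtreeAt p = some t' →
        PTree.onLongPath t (q.drop p.length) →
        (¬ t.Red → t'.Green) ∧ (p ≠ q → t'.abal = t.abal - 1) := by
  rintro p ⟨s, rfl⟩ t t' ht ht' hlp
  rw [List.drop_left] at hlp
  have hb : t.subtreeAt s = some before := by
    rwa [PTree.subtreeAt_append, ht, Option.bind_some] at hq
  obtain rfl : t.replaceAt s after = t' := by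
    rwa [PTree.subtreeAt_replaceAt_append, ht, Option.map_some, Option.some.injEq] at ht'
  have hlost := PTree.height_eq_height_replaceAt_add_one hb hlp hheight
  refine ⟨fun hred => ?_, fun hne => ?_⟩
  · exact PTree.green_of_height_lt_of_not_red hred (by omega)
      (PTree.leaves_le_leaves_replaceAt hb hleaves)
  · have hs : s ≠ [] := by rintro rfl; simp at hne
    exact PTree.abal_replaceAt hb hlp hs hheight

/-- Let `α` be a height reducing rotation applicable at the
node `v` of `Ψ` situated at path `q` (before-subtree `before`, with deeper
child `w` combining `up` and `stay`, other child `down`; after-subtree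
`after` with children `up` and `w'`, the latter combining `down` and `stay`;
heights satisfying the height reducing condition).  Apply `α` at `v`, i.e.
replace the subtree at `q` by `after`.  Then every node of `lp⁻¹(v)` (a
prefix-path `p` of `q` whose node has `v` on its long path) that was yellow
before the rotation is green after the rotation, and every node of
`lp⁻¹(v)` other than `v` has its absolute balance decreased by exactly
one. -/
theorem height_reducing_rotation_lp_inv
    (Ψ : PTree) (q : List Bool)
    (up down stay w before after w' : PTree)
    (hq : Ψ.subtreeAt q = some before)
    (hw : PTree.IsComb w up stay)
    (hbefore : PTree.IsComb before w down)
    (hw' : PTree.IsComb w' down stay)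
    (hafter : PTree.IsComb after up w')
    (hhr : up.height > max down.height stay.height) :
    ∀ p, p <+: q →
      ∀ t t', Ψ.subtreeAt p = some t →
        (Ψ.replaceAt q after).subtreeAt p = some t' →
        PTree.onLongPath t (q.drop p.length) →
        (t.Yellow → t'.Green) ∧ (p ≠ q → t'.abal = t.abal - 1) := by
  have hheight := PTree.height_eq_height_add_one_of_rotation hw hbefore hw' hafter hhr
  have hleaves := (PTree.leaves_eq_of_rotation hw hbefore hw' hafter).le
  intro p hp t t' ht ht' hlp
  exact (height_reducing_rotation_lp_inv_general Ψ q before after hq hheight hleaves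
    p hp t t' ht ht' hlp).imp_left (· ∘ PTree.Yellow.not_red)
end

section
/- Let Ψ be a parse tree and let α be a height preserving rotation applicable at an inner node v of Ψ with deeper child w, and let v′ and w′ denote the upper and lower inner node of the rotated subtree. Then (a) the rotated subtree α(Ψ_v) has the same height as Ψ_v, (b) |balance(v′)| = |balance(w)| + 1, (c) |balance(w′)| = |balance(v)| − 1, and (d) B(α(Ψ_v)) = B(Ψ_v). -/
/-! If `Ψ_→` is at least as high as `Ψ_↑` and `Ψ_↓`, then all heights along the rotation are read
off from `Ψ_→`: both `w` and `w'` have height `height(Ψ_→) + 1`, and both `v` and `v'` have height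
`height(Ψ_→) + 2`. Thus `Ψ_↑` trades the sibling `Ψ_→` for the one unit higher `w'`, while `Ψ_↓`
trades the sibling `w` for the one unit lower `Ψ_→`, and these two changes cancel in the total
balance. -/

namespace PTree.IsComb

section Children

variable {t a b : PTree}

theorem symm (h : IsComb t a b) : IsComb t b a := Or.symm h

theorem height_eq_s5 (h : IsComb t a b) : t.height = 1 + max a.height b.height := by
  rcases h with rfl | rfl
  · rfl
  · rw [max_comm, height]

theorem abal_eq (h : IsComb t a b) : t.abal = |(b.height : ℤ) - a.height| := by
  rcases h with rfl | rfl
  · rfl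
  · exact abs_sub_comm _ _

theorem totalBal_eq (h : IsComb t a b) : t.totalBal = t.abal + a.totalBal + b.totalBal := by
  rcases h with rfl | rfl
  · rfl
  · exact add_right_comm _ _ _

theorem height_eq_of_le (h : IsComb t a b) (hab : a.height ≤ b.height) :
    t.height = b.height + 1 := by
  rw [h.height_eq_s5, max_eq_right hab, add_comm]

theorem abal_eq_of_le (h : IsComb t a b) (hab : a.height ≤ b.height) :
    t.abal = b.height - a.height := by
  rw [h.abal_eq, abs_of_nonneg (by lia)]

end Children

section Rotation

variable {up down stay w before after w' : PTree}

theorem height_rotation (hw : IsComb w up stay) (hbefore : IsComb before w down)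
    (hw' : IsComb w' down stay) (hafter : IsComb after up w')
    (hup : up.height ≤ stay.height) (hdown : down.height ≤ stay.height) :
    after.height = before.height := by
  have hw_height : w.height = stay.height + 1 := hw.height_eq_of_le hup
  have hw'_height : w'.height = stay.height + 1 := hw'.height_eq_of_le hdown
  calc
    after.height = w'.height + 1 := hafter.height_eq_of_le (by lia)
    _ = w.height + 1 := by rw [hw'_height, hw_height]
    _ = before.height := (hbefore.symm.height_eq_of_le (by lia)).symm

theorem abal_upper_rotation (hw : IsComb w up stay) (hw' : IsComb w' down stay)
    (hafter : IsComb after up w') (hup : up.height ≤ stay.height)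
    (hdown : down.height ≤ stay.height) :
    after.abal = w.abal + 1 := by
  have hw'_height : w'.height = stay.height + 1 := hw'.height_eq_of_le hdown
  calc
    after.abal = w'.height - up.height := hafter.abal_eq_of_le (by lia)
    _ = stay.height - up.height + 1 := by lia
    _ = w.abal + 1 := by rw [hw.abal_eq_of_le hup]

theorem abal_lower_rotation (hw : IsComb w up stay) (hbefore : IsComb before w down)
    (hw' : IsComb w' down stay) (hup : up.height ≤ stay.height)
    (hdown : down.height ≤ stay.height) :
    w'.abal = before.abal - 1 :=
  -- Undoing the rotation is again a rotation, in which `up` and `down` swap roles.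
  eq_sub_of_add_eq (abal_upper_rotation hw' hw hbefore.symm hdown hup).symm

theorem totalBal_rotation (hw : IsComb w up stay) (hbefore : IsComb before w down)
    (hw' : IsComb w' down stay) (hafter : IsComb after up w')
    (hup : up.height ≤ stay.height) (hdown : down.height ≤ stay.height) :
    after.totalBal = before.totalBal := by
  have habal : after.abal + w'.abal = before.abal + w.abal := by
    rw [abal_upper_rotation hw hw' hafter hup hdown,
      abal_lower_rotation hw hbefore hw' hup hdown]
    ring
  calc
    after.totalBal
        = after.abal + w'.abal + (up.totalBal + down.totalBal + stay.totalBal) := by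
      rw [hafter.totalBal_eq, hw'.totalBal_eq]
      ring
    _ = before.abal + w.abal + (up.totalBal + down.totalBal + stay.totalBal) := by rw [habal]
    _ = before.totalBal := by
      rw [hbefore.totalBal_eq, hw.totalBal_eq]
      ring

end Rotation

end PTree.IsComb

theorem height_preserving_rotation_properties_general
    {up down stay w before after w' : PTree}
    (hw : PTree.IsComb w up stay)
    (hbefore : PTree.IsComb before w down)
    (hw' : PTree.IsComb w' down stay)
    (hafter : PTree.IsComb after up w')
    (hstay : max up.height down.height ≤ stay.height) :
    after.height = before.height ∧
    after.abal = w.abal + 1 ∧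
    w'.abal = before.abal - 1 ∧
    after.totalBal = before.totalBal := by
  obtain ⟨hup, hdown⟩ := max_le_iff.mp hstay
  exact ⟨PTree.IsComb.height_rotation hw hbefore hw' hafter hup hdown,
    PTree.IsComb.abal_upper_rotation hw hw' hafter hup hdown,
    PTree.IsComb.abal_lower_rotation hw hbefore hw' hup hdown,
    PTree.IsComb.totalBal_rotation hw hbefore hw' hafter hup hdown⟩

/-- Let `α` be a height preserving rotation applicable at an
inner node `v` of `Ψ` with deeper child `w` (before-subtree `before`, `w`
combining `up` and `stay`, other child `down`; after-subtree `after` whose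
root is `v'`, with children `up` and the new lower node `w'` combining
`down` and `stay`; height preserving condition
`height(stay) > max(height(up), height(down))`).  Then
(a) `height(α(Ψ_v)) = height(Ψ_v)`,
(b) `|balance(v')| = |balance(w)| + 1`,
(c) `|balance(w')| = |balance(v)| − 1`, and
(d) `B(α(Ψ_v)) = B(Ψ_v)`. -/
theorem height_preserving_rotation_properties
    (up down stay w before after w' : PTree)
    (hw : PTree.IsComb w up stay)
    (hbefore : PTree.IsComb before w down)
    (hw' : PTree.IsComb w' down stay)
    (hafter : PTree.IsComb after up w')
    (hhp : stay.height > max up.height down.height) :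
    after.height = before.height ∧
    after.abal = w.abal + 1 ∧
    w'.abal = before.abal - 1 ∧
    after.totalBal = before.totalBal := by
  exact height_preserving_rotation_properties_general hw hbefore hw' hafter hhp.le
end
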